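/- For any interpretation I of a PEUF p-formula F, there is a maximally diverse interpretation I* for F such that: if I*[F] is true then I[F] is true. -/

import Mathlib

mutual
inductive EufTerm (Fn Pr : Type) : Type
  | app : Fn → List (EufTerm Fn Pr) → EufTerm Fn Pr
  | ite : EufFormula Fn Pr → EufTerm Fn Pr → EufTerm Fn Pr → EufTerm Fn Pr
inductive EufFormula (Fn Pr : Type) : Type
  | tt : EufFormula Fn Pr
  | ff : EufFormula Fn Pr
  | not : EufFormula Fn Pr → EufFormula Fn Pr
  | and : EufFormula Fn Pr → EufFormula Fn Pr → EufFormula Fn Pr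
  | or : EufFormula Fn Pr → EufFormula Fn Pr → EufFormula Fn Pr
  | eq : EufTerm Fn Pr → EufTerm Fn Pr → EufFormula Fn Pr
  | papp : Pr → List (EufTerm Fn Pr) → EufFormula Fn Pr
end

structure Interp (Fn Pr : Type) (D : Type u) where
  fn : Fn → List D → D
  pr : Pr → List D → Bool

open Classical in
mutual
noncomputable def evalT {Fn Pr : Type} {D : Type} (I : Interp Fn Pr D) : EufTerm Fn Pr → D
  | .app f args => I.fn f (args.attach.map (fun t => evalT I t.1))
  | .ite G T1 T2 => if evalF I G then evalT I T1 else evalT I T2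
termination_by t => sizeOf t
decreasing_by
  all_goals simp_wf
  all_goals try omega
  all_goals (have := List.sizeOf_lt_of_mem t.2; omega)
noncomputable def evalF {Fn Pr : Type} {D : Type} (I : Interp Fn Pr D) : EufFormula Fn Pr → Bool
  | .tt => true
  | .ff => false
  | .not G => !evalF I G
  | .and G1 G2 => evalF I G1 && evalF I G2
  | .or G1 G2 => evalF I G1 || evalF I G2
  | .eq T1 T2 => decide (evalT I T1 = evalT I T2)
  | .papp p args => I.pr p (args.attach.map (fun t => evalT I t.1))
termination_by g => sizeOf g
decreasing_by
  all_goals simp_wf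
  all_goals try omega
  all_goals (have := List.sizeOf_lt_of_mem t.2; omega)
end
def ValidOn {Fn Pr : Type} (F : EufFormula Fn Pr) (D : Type) : Prop :=
  ∀ I : Interp Fn Pr D, evalF I F = true

def UniversallyValid {Fn Pr : Type} (F : EufFormula Fn Pr) : Prop :=
  ∀ D : Type, Nonempty D → ValidOn F D

/-- Expressions: terms or formulas. -/
inductive EufExpr (Fn Pr : Type) : Type
  | t : EufTerm Fn Pr → EufExpr Fn Pr
  | f : EufFormula Fn Pr → EufExpr Fn Pr

/-- Immediate (proper) subexpression relation. -/
inductive ImmSub {Fn Pr : Type} : EufExpr Fn Pr → EufExpr Fn Pr → Prop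
  | appArg {g : Fn} {args : List (EufTerm Fn Pr)} {T : EufTerm Fn Pr} :
      T ∈ args → ImmSub (.t T) (.t (.app g args))
  | iteC {G : EufFormula Fn Pr} {T1 T2 : EufTerm Fn Pr} : ImmSub (.f G) (.t (.ite G T1 T2))
  | ite1 {G : EufFormula Fn Pr} {T1 T2 : EufTerm Fn Pr} : ImmSub (.t T1) (.t (.ite G T1 T2))
  | ite2 {G : EufFormula Fn Pr} {T1 T2 : EufTerm Fn Pr} : ImmSub (.t T2) (.t (.ite G T1 T2))
  | not {G : EufFormula Fn Pr} : ImmSub (.f G) (.f (.not G))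
  | andL {G1 G2 : EufFormula Fn Pr} : ImmSub (.f G1) (.f (.and G1 G2))
  | andR {G1 G2 : EufFormula Fn Pr} : ImmSub (.f G2) (.f (.and G1 G2))
  | orL {G1 G2 : EufFormula Fn Pr} : ImmSub (.f G1) (.f (.or G1 G2))
  | orR {G1 G2 : EufFormula Fn Pr} : ImmSub (.f G2) (.f (.or G1 G2))
  | eqL {T1 T2 : EufTerm Fn Pr} : ImmSub (.t T1) (.f (.eq T1 T2))
  | eqR {T1 T2 : EufTerm Fn Pr} : ImmSub (.t T2) (.f (.eq T1 T2))
  | pappArg {p : Pr} {args : List (EufTerm Fn Pr)} {T : EufTerm Fn Pr} :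
      T ∈ args → ImmSub (.t T) (.f (.papp p args))

/-- `SubExpr a b`: `a` occurs (as a subexpression) in `b`. -/
def SubExpr {Fn Pr : Type} (a b : EufExpr Fn Pr) : Prop := Relation.ReflTransGen ImmSub a b

def TermInT {Fn Pr : Type} (T S : EufTerm Fn Pr) : Prop := SubExpr (.t T) (.t S)
def TermInF {Fn Pr : Type} (T : EufTerm Fn Pr) (F : EufFormula Fn Pr) : Prop :=
  SubExpr (.t T) (.f F)
def FormulaInT {Fn Pr : Type} (G : EufFormula Fn Pr) (S : EufTerm Fn Pr) : Prop :=
  SubExpr (.f G) (.t S)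
def FormulaInF {Fn Pr : Type} (G F : EufFormula Fn Pr) : Prop := SubExpr (.f G) (.f F)

def IsAppTerm {Fn Pr : Type} : EufTerm Fn Pr → Prop
  | .app _ _ => True
  | _ => False

/-- `𝒯(F)`: the function application terms occurring in `F`. -/
def AppTermsF {Fn Pr : Type} (F : EufFormula Fn Pr) : Set (EufTerm Fn Pr) :=
  {T | IsAppTerm T ∧ TermInF T F}

/-- A function symbol occurs in `F` when some application of it occurs in `F`. -/
def FnInF {Fn Pr : Type} (g : Fn) (F : EufFormula Fn Pr) : Prop :=
  ∃ args, TermInF (EufTerm.app g args) F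

def PrInF {Fn Pr : Type} (p : Pr) (F : EufFormula Fn Pr) : Prop :=
  ∃ args, FormulaInF (EufFormula.papp p args) F

/-- `I` is diverse for `F` with respect to the set `Sg` of function symbols. -/
def DiverseFor {Fn Pr D : Type} (I : Interp Fn Pr D) (F : EufFormula Fn Pr)
    (Sg : Set Fn) : Prop :=
  ∀ (g : Fn) (args : List (EufTerm Fn Pr)), g ∈ Sg →
    TermInF (EufTerm.app g args) F →
    ∀ T2 ∈ AppTermsF F, evalT I (EufTerm.app g args) = evalT I T2 →
      ∃ args2, T2 = EufTerm.app g args2 ∧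
        List.Forall₂ (fun a b => evalT I a = evalT I b) args args2

mutual
/-- PEUF g-terms, where `isP` designates the p-function symbols. -/
inductive IsGTerm {Fn Pr : Type} (isP : Fn → Prop) : EufTerm Fn Pr → Prop
  | ite {G : EufFormula Fn Pr} {T1 T2 : EufTerm Fn Pr} :
      IsGFormula isP G → IsGTerm isP T1 → IsGTerm isP T2 → IsGTerm isP (.ite G T1 T2)
  | app {g : Fn} {args : List (EufTerm Fn Pr)} :
      ¬ isP g → (∀ T ∈ args, IsPTerm isP T) → IsGTerm isP (.app g args)
/-- PEUF p-terms. -/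
inductive IsPTerm {Fn Pr : Type} (isP : Fn → Prop) : EufTerm Fn Pr → Prop
  | g {T : EufTerm Fn Pr} : IsGTerm isP T → IsPTerm isP T
  | ite {G : EufFormula Fn Pr} {T1 T2 : EufTerm Fn Pr} :
      IsGFormula isP G → IsPTerm isP T1 → IsPTerm isP T2 → IsPTerm isP (.ite G T1 T2)
  | app {g : Fn} {args : List (EufTerm Fn Pr)} :
      isP g → (∀ T ∈ args, IsPTerm isP T) → IsPTerm isP (.app g args)
/-- PEUF g-formulas. -/
inductive IsGFormula {Fn Pr : Type} (isP : Fn → Prop) : EufFormula Fn Pr → Prop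
  | tt : IsGFormula isP .tt
  | ff : IsGFormula isP .ff
  | not {G : EufFormula Fn Pr} : IsGFormula isP G → IsGFormula isP (.not G)
  | and {G1 G2 : EufFormula Fn Pr} :
      IsGFormula isP G1 → IsGFormula isP G2 → IsGFormula isP (.and G1 G2)
  | or {G1 G2 : EufFormula Fn Pr} :
      IsGFormula isP G1 → IsGFormula isP G2 → IsGFormula isP (.or G1 G2)
  | eq {T1 T2 : EufTerm Fn Pr} :
      IsGTerm isP T1 → IsGTerm isP T2 → IsGFormula isP (.eq T1 T2)
  | papp {p : Pr} {args : List (EufTerm Fn Pr)} :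
      (∀ T ∈ args, IsPTerm isP T) → IsGFormula isP (.papp p args)
/-- PEUF p-formulas. -/
inductive IsPFormula {Fn Pr : Type} (isP : Fn → Prop) : EufFormula Fn Pr → Prop
  | g {G : EufFormula Fn Pr} : IsGFormula isP G → IsPFormula isP G
  | and {G1 G2 : EufFormula Fn Pr} :
      IsPFormula isP G1 → IsPFormula isP G2 → IsPFormula isP (.and G1 G2)
  | or {G1 G2 : EufFormula Fn Pr} :
      IsPFormula isP G1 → IsPFormula isP G2 → IsPFormula isP (.or G1 G2)
  | eq {T1 T2 : EufTerm Fn Pr} :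
      IsPTerm isP T1 → IsPTerm isP T2 → IsPFormula isP (.eq T1 T2)
end

/-- The p-function symbols occurring in `F`. -/
def PSymbolsIn {Fn Pr : Type} (isP : Fn → Prop) (F : EufFormula Fn Pr) : Set Fn :=
  {g | isP g ∧ FnInF g F}

/-- `I` is maximally diverse for the p-formula `F`. -/
def MaxDiverse {Fn Pr D : Type} (isP : Fn → Prop) (I : Interp Fn Pr D)
    (F : EufFormula Fn Pr) : Prop :=
  DiverseFor I F (PSymbolsIn isP F)

/-- `I'` refines `I` on the term set `Ts`. -/
def RefinesOn {Fn Pr D D' : Type} (I' : Interp Fn Pr D') (I : Interp Fn Pr D)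
    (Ts : Set (EufTerm Fn Pr)) : Prop :=
  ∀ T1 ∈ Ts, ∀ T2 ∈ Ts, evalT I' T1 = evalT I' T2 → evalT I T1 = evalT I T2

def ProperRefinesOn {Fn Pr D D' : Type} (I' : Interp Fn Pr D') (I : Interp Fn Pr D)
    (Ts : Set (EufTerm Fn Pr)) : Prop :=
  RefinesOn I' I Ts ∧
    ∃ T1 ∈ Ts, ∃ T2 ∈ Ts, evalT I T1 = evalT I T2 ∧ evalT I' T1 ≠ evalT I' T2

/-!
Tag every value produced by a p-function symbol with the symbol and the arguments it came from.
Tagged values collide only when symbol and arguments agree, so the tagged interpretation is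
maximally diverse, and forgetting the tags maps it homomorphically onto the given one. Values of
g-terms carry no outer tag, so equations between them keep their truth value; equations between
p-terms can only become false, which is harmless because they occur positively in a p-formula.
-/

theorem evalT_app {Fn Pr D : Type} (I : Interp Fn Pr D) (f : Fn) (args : List (EufTerm Fn Pr)) :
    evalT I (.app f args) = I.fn f (args.map (evalT I)) := by
  simp [evalT]

theorem evalF_papp {Fn Pr D : Type} (I : Interp Fn Pr D) (p : Pr) (args : List (EufTerm Fn Pr)) :
    evalF I (.papp p args) = I.pr p (args.map (evalT I)) := by
  simp [evalF]

theorem DiverseFor.mono {Fn Pr D : Type} {I : Interp Fn Pr D} {F : EufFormula Fn Pr}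
    {Sg Sg' : Set Fn} (hI : DiverseFor I F Sg') (h : Sg ⊆ Sg') : DiverseFor I F Sg :=
  fun g args hg => hI g args (h hg)

namespace Interp

section FreeOn

variable {Fn Pr D : Type} {I : Interp Fn Pr D} {Sg : Set Fn}

/-- `I` is free on `Sg` if a value of a symbol in `Sg` determines, among the values of all
function symbols, both the symbol and the arguments. This is diversity with respect to `Sg`
stated for domain elements, hence independent of any formula. -/
def IsFreeOn (I : Interp Fn Pr D) (Sg : Set Fn) : Prop :=
  ∀ ⦃f g : Fn⦄ ⦃as bs : List D⦄, f ∈ Sg → I.fn f as = I.fn g bs → f = g ∧ as = bs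

theorem IsFreeOn.diverseFor (hI : I.IsFreeOn Sg) (F : EufFormula Fn Pr) : DiverseFor I F Sg := by
  rintro f args hf - (⟨g, args'⟩ | _) ⟨happ, -⟩ heq
  · rw [evalT_app, evalT_app] at heq
    obtain ⟨rfl, hargs⟩ := hI hf heq
    refine ⟨args', rfl, ?_⟩
    rwa [← List.forall₂_eq_eq_eq, List.forall₂_map_left_iff, List.forall₂_map_right_iff] at hargs
  · exact happ.elim

end FreeOn

section Projection

variable {Fn Pr D D' : Type} {isP : Fn → Prop} {I' : Interp Fn Pr D'} {I : Interp Fn Pr D}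
  {h : D' → D}

/-- The values taken by the g-function symbols, i.e. by the symbols outside `isP`. -/
def gValues (isP : Fn → Prop) (I : Interp Fn Pr D) : Set D :=
  {x | ∃ f as, ¬ isP f ∧ I.fn f as = x}

theorem evalT_mem_gValues (I : Interp Fn Pr D) {T : EufTerm Fn Pr} :
    IsGTerm isP T → evalT I T ∈ gValues isP I
  | .ite _ h₁ h₂ => by
    rw [evalT]
    split
    exacts [evalT_mem_gValues I h₁, evalT_mem_gValues I h₂]
  | .app hf _ => ⟨_, _, hf, (evalT_app I _ _).symm⟩

/-- `h` is a homomorphism from `I'` to `I` that identifies no two values of g-function symbols.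
Such a map preserves the meaning of g-formulas, although it need not be injective. -/
structure IsGProjection (isP : Fn → Prop) (I' : Interp Fn Pr D') (I : Interp Fn Pr D)
    (h : D' → D) : Prop where
  map_fn : ∀ f as, h (I'.fn f as) = I.fn f (as.map h)
  pr_eq : ∀ p as, I'.pr p as = I.pr p (as.map h)
  injOn : Set.InjOn h (gValues isP I')

theorem map_evalT_ite {G : EufFormula Fn Pr} {T₁ T₂ : EufTerm Fn Pr}
    (hG : evalF I' G = evalF I G) (h₁ : h (evalT I' T₁) = evalT I T₁)
    (h₂ : h (evalT I' T₂) = evalT I T₂) :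
    h (evalT I' (.ite G T₁ T₂)) = evalT I (.ite G T₁ T₂) := by
  rw [evalT, evalT, hG, apply_ite h, h₁, h₂]

namespace IsGProjection

theorem map_evalT_app (hh : IsGProjection isP I' I h) (f : Fn) {args : List (EufTerm Fn Pr)}
    (hargs : ∀ T ∈ args, h (evalT I' T) = evalT I T) :
    h (evalT I' (.app f args)) = evalT I (.app f args) := by
  rw [evalT_app, evalT_app, hh.map_fn, List.map_map]
  exact congrArg (I.fn f) (List.map_congr_left hargs)

theorem evalF_papp_eq (hh : IsGProjection isP I' I h) (p : Pr) {args : List (EufTerm Fn Pr)}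
    (hargs : ∀ T ∈ args, h (evalT I' T) = evalT I T) :
    evalF I' (.papp p args) = evalF I (.papp p args) := by
  rw [evalF_papp, evalF_papp, hh.pr_eq, List.map_map]
  exact congrArg (I.pr p) (List.map_congr_left hargs)

theorem evalF_eq_eq (hh : IsGProjection isP I' I h) {T₁ T₂ : EufTerm Fn Pr}
    (hT₁ : IsGTerm isP T₁) (hT₂ : IsGTerm isP T₂)
    (h₁ : h (evalT I' T₁) = evalT I T₁) (h₂ : h (evalT I' T₂) = evalT I T₂) :
    evalF I' (.eq T₁ T₂) = evalF I (.eq T₁ T₂) := by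
  rw [evalF, evalF, ← h₁, ← h₂]
  exact decide_eq_decide.2
    (hh.injOn.eq_iff (evalT_mem_gValues I' hT₁) (evalT_mem_gValues I' hT₂)).symm

mutual

theorem map_evalT_of_isGTerm (hh : IsGProjection isP I' I h) {T : EufTerm Fn Pr} :
    IsGTerm isP T → h (evalT I' T) = evalT I T
  | .ite hG h₁ h₂ =>
    map_evalT_ite (hh.evalF_eq_of_isGFormula hG) (hh.map_evalT_of_isGTerm h₁)
      (hh.map_evalT_of_isGTerm h₂)
  | .app _ hargs => hh.map_evalT_app _ fun T hT => hh.map_evalT_of_isPTerm (hargs T hT)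

theorem map_evalT_of_isPTerm (hh : IsGProjection isP I' I h) {T : EufTerm Fn Pr} :
    IsPTerm isP T → h (evalT I' T) = evalT I T
  | .g hT => hh.map_evalT_of_isGTerm hT
  | .ite hG h₁ h₂ =>
    map_evalT_ite (hh.evalF_eq_of_isGFormula hG) (hh.map_evalT_of_isPTerm h₁)
      (hh.map_evalT_of_isPTerm h₂)
  | .app _ hargs => hh.map_evalT_app _ fun T hT => hh.map_evalT_of_isPTerm (hargs T hT)

theorem evalF_eq_of_isGFormula (hh : IsGProjection isP I' I h) {G : EufFormula Fn Pr} :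
    IsGFormula isP G → evalF I' G = evalF I G
  | .tt => by rw [evalF, evalF]
  | .ff => by rw [evalF, evalF]
  | .not hG => by rw [evalF, evalF, hh.evalF_eq_of_isGFormula hG]
  | .and h₁ h₂ => by
    rw [evalF, evalF, hh.evalF_eq_of_isGFormula h₁, hh.evalF_eq_of_isGFormula h₂]
  | .or h₁ h₂ => by
    rw [evalF, evalF, hh.evalF_eq_of_isGFormula h₁, hh.evalF_eq_of_isGFormula h₂]
  | .eq h₁ h₂ =>
    hh.evalF_eq_eq h₁ h₂ (hh.map_evalT_of_isGTerm h₁) (hh.map_evalT_of_isGTerm h₂)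
  | .papp hargs => hh.evalF_papp_eq _ fun T hT => hh.map_evalT_of_isPTerm (hargs T hT)

end

theorem evalF_of_isPFormula (hh : IsGProjection isP I' I h) {F : EufFormula Fn Pr} :
    IsPFormula isP F → evalF I' F = true → evalF I F = true
  | .g hG => fun hI' => hh.evalF_eq_of_isGFormula hG ▸ hI'
  | .and h₁ h₂ => by
    simp only [evalF, Bool.and_eq_true]
    exact And.imp (hh.evalF_of_isPFormula h₁) (hh.evalF_of_isPFormula h₂)
  | .or h₁ h₂ => by
    simp only [evalF, Bool.or_eq_true]
    exact Or.imp (hh.evalF_of_isPFormula h₁) (hh.evalF_of_isPFormula h₂)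
  | .eq h₁ h₂ => by
    simp only [evalF, decide_eq_true_eq, ← hh.map_evalT_of_isPTerm h₁,
      ← hh.map_evalT_of_isPTerm h₂]
    exact congrArg h

end IsGProjection

end Projection

end Interp

/-- The domain of the tagged interpretation: an element of `D`, either bare or tagged with a
function symbol and the arguments it was applied to. Storing the element of `D` in `tagged` makes
forgetting the tag independent of any interpretation. -/
inductive TaggedValue (Fn D : Type) : Type
  | bare : D → TaggedValue Fn D
  | tagged : Fn → List (TaggedValue Fn D) → D → TaggedValue Fn D

/-- The element of `D` underlying a tagged value. -/
def TaggedValue.untag {Fn D : Type} : TaggedValue Fn D → D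
  | .bare x => x
  | .tagged _ _ x => x

namespace Interp

variable {Fn Pr D : Type} (isP : Fn → Prop) (I : Interp Fn Pr D)

open Classical in
/-- The interpretation that computes as `I` does on the underlying elements and tags the results
of exactly the p-function symbols. -/
noncomputable def tag : Interp Fn Pr (TaggedValue Fn D) where
  fn f as :=
    if isP f then .tagged f as (I.fn f (as.map TaggedValue.untag))
    else .bare (I.fn f (as.map TaggedValue.untag))
  pr p as := I.pr p (as.map TaggedValue.untag)

variable {isP} in
theorem tag_fn_of_isP {f : Fn} (hf : isP f) (as : List (TaggedValue Fn D)) :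
    (I.tag isP).fn f as = .tagged f as (I.fn f (as.map TaggedValue.untag)) :=
  if_pos hf

variable {isP} in
theorem tag_fn_of_not_isP {f : Fn} (hf : ¬ isP f) (as : List (TaggedValue Fn D)) :
    (I.tag isP).fn f as = .bare (I.fn f (as.map TaggedValue.untag)) :=
  if_neg hf

theorem tag_isFreeOn : (I.tag isP).IsFreeOn {f | isP f} := by
  intro f g as bs (hf : isP f) heq
  rw [I.tag_fn_of_isP hf] at heq
  by_cases hg : isP g
  · rw [I.tag_fn_of_isP hg] at heq
    injection heq with hfg hargs
    exact ⟨hfg, hargs⟩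
  · rw [I.tag_fn_of_not_isP hg] at heq
    contradiction

theorem untag_tag_fn (f : Fn) (as : List (TaggedValue Fn D)) :
    ((I.tag isP).fn f as).untag = I.fn f (as.map TaggedValue.untag) := by
  by_cases hf : isP f
  · rw [I.tag_fn_of_isP hf, TaggedValue.untag]
  · rw [I.tag_fn_of_not_isP hf, TaggedValue.untag]

theorem injOn_untag_gValues_tag :
    Set.InjOn TaggedValue.untag (gValues isP (I.tag isP)) := by
  rintro _ ⟨f, as, hf, rfl⟩ _ ⟨g, bs, hg, rfl⟩ heq
  rw [I.tag_fn_of_not_isP hf, I.tag_fn_of_not_isP hg] at heq ⊢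
  exact congrArg TaggedValue.bare heq

theorem tag_isGProjection : IsGProjection isP (I.tag isP) I TaggedValue.untag where
  map_fn := I.untag_tag_fn isP
  pr_eq _ _ := rfl
  injOn := I.injOn_untag_gValues_tag isP

end Interp

/-- For any interpretation `I` of a p-formula `F` there is a maximally
diverse interpretation `I*` for `F` with `I*[F] ⇒ I[F]`. -/
theorem diverse_lemma {Fn Pr D : Type} [Nonempty D] (isP : Fn → Prop)
    (F : EufFormula Fn Pr) (hF : IsPFormula isP F) (I : Interp Fn Pr D) :
    ∃ (D' : Type) (_ : Nonempty D') (Istar : Interp Fn Pr D'),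
      MaxDiverse isP Istar F ∧ (evalF Istar F = true → evalF I F = true) := by
  have hdiverse : DiverseFor (I.tag isP) F {f | isP f} := (I.tag_isFreeOn isP).diverseFor F
  exact ⟨TaggedValue Fn D, ‹Nonempty D›.map .bare, I.tag isP,
    hdiverse.mono fun _ hf => hf.1, (I.tag_isGProjection isP).evalF_of_isPFormula hF⟩
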